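/- Let X ⊆ A^n_k be an arrangement of linear subspaces over a field k, defined by an ideal I ⊆ R = k[x_1,...,x_n], with intersection poset P(X). Then for each i ≥ 0 and j ≥ 0 there is an R-module isomorphism colim^{(i)}_{P(X)} H^j_{[*]}(R) ≅ ⊕_{p : h(p)=j} H^j_{I_p}(R)^{⊕ b_{i,p}}, where b_{i,p} = dim_k H̃_{i-1}(K(>p); k). -/

import Mathlib

/-- Chains of `m` elements of a preorder `P`: strictly increasing `m`-tuples. These are the
`(m-1)`-simplices of the order complex `K(P)`; for `m = 0` there is exactly one (empty) chain. -/
@[reducible] def pchains (P : Type*) [Preorder P] (m : ℕ) : Type _ :=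
  {f : Fin m → P // StrictMono f}

/-- The boundary map of the augmented simplicial chain complex of the order complex of `P`
with coefficients in `M`: the alternating sum over deletions of a vertex.  In degree `0`
this is the augmentation onto `pchains P 0 →₀ M ≃ M`. -/
noncomputable def simpBdry (A : Type*) [CommRing A] (M : Type*) [AddCommGroup M] [Module A M]
    (P : Type*) [Preorder P] (m : ℕ) :
    (pchains P (m + 1) →₀ M) →ₗ[A] (pchains P m →₀ M) :=
  Finsupp.lsum ℕ fun c =>
    ∑ i : Fin (m + 1), ((-1 : A) ^ (i : ℕ)) •
      (Finsupp.lsingle (⟨c.1 ∘ i.succAbove, c.2.comp (Fin.strictMono_succAbove i)⟩ : pchains P m))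

/-- Cycles of the augmented simplicial chain complex (everything in lowest degree). -/
noncomputable def simpCycles (A : Type*) [CommRing A] (M : Type*) [AddCommGroup M] [Module A M]
    (P : Type*) [Preorder P] : (m : ℕ) → Submodule A (pchains P m →₀ M)
  | 0 => ⊤
  | (m + 1) => LinearMap.ker (simpBdry A M P m)

/-- `simpHomology A M P m` is the reduced simplicial homology `H̃_{m-1}(K(P); M)` of the order
complex of `P` with coefficients in the `A`-module `M`, computed from the augmented chain
complex; with this convention `H̃_{-1}(∅; M) = M` (the case `m = 0`, `P = ∅`). -/
@[reducible] noncomputable def simpHomology (A : Type*) [CommRing A] (M : Type*) [AddCommGroup M] [Module A M]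
    (P : Type*) [Preorder P] (m : ℕ) : Type _ :=
  ↥(simpCycles A M P m) ⧸
    (Submodule.comap (simpCycles A M P m).subtype (LinearMap.range (simpBdry A M P m)))

open MvPolynomial DirectSum

/-- The height of an ideal: the infimum of the heights (in the prime spectrum) of the
minimal primes over it. -/
noncomputable def idealHeight {R : Type*} [CommRing R] (I : Ideal R) : ℕ∞ :=
  ⨅ p : {p : Ideal R // p ∈ I.minimalPrimes},
    Order.height (⟨p.1, p.2.1.1⟩ : PrimeSpectrum R)

/-- The local cohomology module `H^r_I(R)` for `R = k[x₁,…,xₙ]`, as a type. -/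
abbrev LC {n : ℕ} (k : Type) [Field k] (I : Ideal (MvPolynomial (Fin n) k)) (r : ℕ) : Type :=
  ((localCohomology I r).obj
    (ModuleCat.of (MvPolynomial (Fin n) k) (MvPolynomial (Fin n) k)))

/-- The underlying family of modules of a diagram over a poset. -/
structure PreDiagram (P : Type) [Preorder P] (A : Type) [CommRing A] where
  obj : P → Type
  acg : ∀ p, AddCommGroup (obj p)
  mod : ∀ p, @Module A (obj p) _ (acg p).toAddCommMonoid

attribute [instance] PreDiagram.acg PreDiagram.mod

/-- A diagram of `A`-modules over a poset `P` (a covariant functor `P → Mod_A`). -/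
structure PDiagram (P : Type) [Preorder P] (A : Type) [CommRing A] extends PreDiagram P A where
  map : ∀ {p q : P}, p ≤ q → (obj p →ₗ[A] obj q)
  map_id : ∀ (p : P) (x : obj p), map (le_refl p) x = x
  map_comp : ∀ {p q r : P} (h₁ : p ≤ q) (h₂ : q ≤ r) (x : obj p),
    map (h₁.trans h₂) x = map h₂ (map h₁ x)

/-- Degree-`m` part of the Roos complex of a diagram `D` over `P`:
`⊕_{p₀ < … < p_m} D(p₀)`. -/
@[reducible] noncomputable def roosC {P : Type} [Preorder P] {A : Type} [CommRing A]
    (D : PDiagram P A) (m : ℕ) : Type :=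
  Π₀ c : pchains P (m + 1), D.obj (c.1 0)

/-- The differential of the Roos complex: on the summand indexed by `p₀ < … < p_{m+1}`, the
alternating sum of the face maps; the `0`-th face is composed with the transition map
`D(p₀ → p₁)` (uniformly realized as `D` applied to `p₀ ≤ (∂ᵢc)₀`). -/
noncomputable def roosBdry {P : Type} [Preorder P] [DecidableEq P] {A : Type} [CommRing A]
    (D : PDiagram P A) (m : ℕ) : roosC D (m + 1) →ₗ[A] roosC D m :=
  DFinsupp.lsum ℕ fun c =>
    ∑ i : Fin (m + 2), ((-1 : A) ^ (i : ℕ)) •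
      ((DFinsupp.lsingle
          (⟨c.1 ∘ i.succAbove, c.2.comp (Fin.strictMono_succAbove i)⟩ : pchains P (m + 1))).comp
        (D.map (c.2.monotone (Fin.zero_le (i.succAbove 0)))))

/-- Cycles of the Roos complex (everything in lowest degree). -/
noncomputable def roosCycles {P : Type} [Preorder P] [DecidableEq P] {A : Type} [CommRing A]
    (D : PDiagram P A) : (m : ℕ) → Submodule A (roosC D m)
  | 0 => ⊤
  | (m + 1) => LinearMap.ker (roosBdry D m)

/-- `roosHomology D m` computes the `m`-th left derived functor of the colimit over `P`
evaluated at the diagram `D`. -/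
@[reducible] noncomputable def roosHomology {P : Type} [Preorder P] [DecidableEq P]
    {A : Type} [CommRing A] (D : PDiagram P A) (m : ℕ) : Type :=
  ↥(roosCycles D m) ⧸
    (Submodule.comap (roosCycles D m).subtype (LinearMap.range (roosBdry D m)))


section KLevel

/-- A linear map over a field vanishing on the kernel of `d` factors through `d`. -/
lemma aux_factor {k C C'' V : Type*} [Field k] [AddCommGroup C] [Module k C]
    [AddCommGroup C''] [Module k C''] [AddCommGroup V] [Module k V]
    (d : C →ₗ[k] C'') (g : C →ₗ[k] V) (h : ∀ x, d x = 0 → g x = 0) :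
    ∃ s : C'' →ₗ[k] V, g = s.comp d := by
  obtain ⟨s, hs⟩ := LinearMap.exists_rightInverse_of_surjective d.rangeRestrict
    (LinearMap.range_rangeRestrict d)
  obtain ⟨t, ht⟩ := LinearMap.exists_extend (p := LinearMap.range d) (g.comp s)
  refine ⟨t, ?_⟩
  ext x
  have h1 : t (d x) = g (s (d.rangeRestrict x)) := by
    have := LinearMap.congr_fun ht (d.rangeRestrict x)
    simpa using this
  rw [LinearMap.comp_apply, h1, ← sub_eq_zero, ← map_sub]
  apply h
  have h2 := LinearMap.congr_fun hs (d.rangeRestrict x)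
  have h3 : d (s (d.rangeRestrict x)) = d x := by
    have := congrArg Subtype.val h2
    simpa using this
  rw [map_sub, h3, sub_self]

/-- Splitting of a complex of finite-dimensional vector spaces. -/
lemma aux_split {k C' C C'' : Type*} [Field k] [AddCommGroup C'] [Module k C']
    [AddCommGroup C] [Module k C] [AddCommGroup C''] [Module k C''] [FiniteDimensional k C]
    (d' : C' →ₗ[k] C) (d : C →ₗ[k] C'') (hd : ∀ x, d (d' x) = 0)
    (Z : Submodule k C) (hZ : Z = LinearMap.ker d) :
    ∃ (p : C →ₗ[k] (Fin (Module.finrank k (Z ⧸ Submodule.comap Z.subtype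
        (LinearMap.range d'))) → k))
      (q : (Fin (Module.finrank k (Z ⧸ Submodule.comap Z.subtype
        (LinearMap.range d'))) → k) →ₗ[k] C)
      (s : C →ₗ[k] C') (s' : C'' →ₗ[k] C),
      p.comp q = LinearMap.id ∧ d.comp q = 0 ∧ p.comp d' = 0 ∧
      LinearMap.id = q.comp p + d'.comp s + s'.comp d := by
  set B := Submodule.comap Z.subtype (LinearMap.range d') with hB
  let e := (Module.finBasis k (Z ⧸ B)).equivFun
  obtain ⟨r, hr⟩ := LinearMap.exists_rightInverse_of_surjective B.mkQ (Submodule.range_mkQ B)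
  obtain ⟨p, hp⟩ := LinearMap.exists_extend (p := Z) (e.toLinearMap.comp B.mkQ)
  have hp' : ∀ z (hz : z ∈ Z), p z = e (B.mkQ ⟨z, hz⟩) := fun z hz => by
    have := LinearMap.congr_fun hp ⟨z, hz⟩
    simpa using this
  have hr' : ∀ y, B.mkQ (r y) = y := fun y => by
    have := LinearMap.congr_fun hr y
    simpa using this
  let q := Z.subtype.comp (r.comp e.symm.toLinearMap)
  have hq : ∀ y, q y ∈ Z := fun y => (r (e.symm y)).2
  have hpq : ∀ y, p (q y) = y := fun y => by
    rw [hp' _ (hq y)]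
    have : (⟨q y, hq y⟩ : Z) = r (e.symm y) := rfl
    rw [this, hr', LinearEquiv.apply_symm_apply]
  have hdZ : ∀ x, d' x ∈ Z := fun x => by rw [hZ]; exact hd x
  have hpd : ∀ x, p (d' x) = 0 := fun x => by
    rw [hp' _ (hdZ x)]
    have : B.mkQ ⟨d' x, hdZ x⟩ = 0 := by
      rw [Submodule.mkQ_apply, Submodule.Quotient.mk_eq_zero]
      exact ⟨x, rfl⟩
    rw [this, map_zero]
  obtain ⟨t, ht⟩ := LinearMap.exists_rightInverse_of_surjective d'.rangeRestrict
    (LinearMap.range_rangeRestrict d')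
  obtain ⟨u, hu⟩ := LinearMap.exists_extend (p := LinearMap.range d') t
  have hu' : ∀ x, d' (u (d' x)) = d' x := fun x => by
    have h1 := LinearMap.congr_fun hu (d'.rangeRestrict x)
    have h2 := congrArg Subtype.val (LinearMap.congr_fun ht (d'.rangeRestrict x))
    simp at h1 h2
    rw [h1]
    exact h2
  let s := u.comp (LinearMap.id - q.comp p)
  obtain ⟨s', hs'⟩ := aux_factor d (LinearMap.id - q.comp p - d'.comp s) (fun x hx => by
    have hxZ : x ∈ Z := by rw [hZ]; exact hx
    have h1 : B.mkQ (⟨x, hxZ⟩ - ⟨q (p x), hq _⟩) = 0 := by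
      apply e.injective
      rw [map_sub, map_sub, ← hp', ← hp', hpq, sub_self, map_zero]
    rw [Submodule.mkQ_apply, Submodule.Quotient.mk_eq_zero] at h1
    obtain ⟨y, hy⟩ := h1
    have hy' : d' y = x - q (p x) := hy
    simp only [s, LinearMap.sub_apply, LinearMap.comp_apply, LinearMap.id_apply]
    rw [← hy', hu', sub_self])
  refine ⟨p, q, s, s', LinearMap.ext hpq, ?_, LinearMap.ext hpd, ?_⟩
  · exact LinearMap.ext fun y => hZ.le (hq y)
  · rw [← hs']; abel

end KLevel

/-- Homology from splitting data. -/
lemma aux_homology {A X' X X'' Y : Type*} [CommRing A] [AddCommGroup X'] [Module A X']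
    [AddCommGroup X] [Module A X] [AddCommGroup X''] [Module A X''] [AddCommGroup Y] [Module A Y]
    (d' : X' →ₗ[A] X) (d : X →ₗ[A] X'')
    (Z : Submodule A X) (hZ : Z = LinearMap.ker d)
    (p : X →ₗ[A] Y) (q : Y →ₗ[A] X) (s : X →ₗ[A] X') (s' : X'' →ₗ[A] X)
    (h1 : ∀ y, p (q y) = y) (h2 : ∀ y, d (q y) = 0) (h3 : ∀ x, p (d' x) = 0)
    (h4 : ∀ x, x = q (p x) + d' (s x) + s' (d x)) :
    Nonempty ((Z ⧸ Submodule.comap Z.subtype (LinearMap.range d')) ≃ₗ[A] Y) := by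
  let f : Z →ₗ[A] Y := p.comp Z.subtype
  have hf : Function.Surjective f := fun y => ⟨⟨q y, by rw [hZ]; exact h2 y⟩, h1 y⟩
  have hk : Submodule.comap Z.subtype (LinearMap.range d') = LinearMap.ker f := by
    ext ⟨z, hz⟩
    constructor
    · rintro ⟨x, hx⟩
      change p z = 0
      have : d' x = z := hx
      rw [← this, h3]
    · intro h
      have hp : p z = 0 := h
      have hd : d z = 0 := by rw [hZ] at hz; exact hz
      refine ⟨s z, ?_⟩
      have := h4 z
      rw [hp, hd, map_zero, map_zero, zero_add, add_zero] at this
      exact this.symm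
  exact ⟨(Submodule.quotEquivOfEq _ _ hk).trans (f.quotKerEquivOfSurjective hf)⟩

section GFunctor

open TensorProduct

variable {k A : Type} [Field k] [CommRing A] [Algebra k A]
  {T : Type} {M : T → Type}
  [∀ p, AddCommGroup (M p)] [∀ p, Module k (M p)] [∀ p, Module A (M p)]
  [∀ p, IsScalarTower k A (M p)]

variable (A M) in
/-- The `A`-linear map induced by a family of `k`-linear maps. -/
noncomputable def gmap {C C' : T → Type} [∀ p, AddCommGroup (C p)] [∀ p, Module k (C p)]
    [∀ p, AddCommGroup (C' p)] [∀ p, Module k (C' p)] (f : ∀ p, C p →ₗ[k] C' p) :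
    (⨁ p, M p ⊗[k] C p) →ₗ[A] (⨁ p, M p ⊗[k] C' p) :=
  DirectSum.lmap fun p => TensorProduct.AlgebraTensorModule.map (LinearMap.id (R := A)) (f p)

variable {C C' C'' : T → Type} [∀ p, AddCommGroup (C p)] [∀ p, Module k (C p)]
    [∀ p, AddCommGroup (C' p)] [∀ p, Module k (C' p)]
    [∀ p, AddCommGroup (C'' p)] [∀ p, Module k (C'' p)]

lemma gmap_of [DecidableEq T] (f : ∀ p, C p →ₗ[k] C' p) (p : T) (x : M p) (c : C p) :
    gmap A M f (DirectSum.lof A T (fun p => M p ⊗[k] C p) p (x ⊗ₜ c)) =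
      DirectSum.lof A T (fun p => M p ⊗[k] C' p) p (x ⊗ₜ f p c) := by
  simp [gmap, DirectSum.lmap_lof]

lemma g_ext [DecidableEq T] {Y : Type} [AddCommGroup Y] [Module A Y]
    {f g : (⨁ p, M p ⊗[k] C p) →ₗ[A] Y}
    (h : ∀ (p : T) (x : M p) (c : C p),
      f (DirectSum.lof A T (fun p => M p ⊗[k] C p) p (x ⊗ₜ c)) =
      g (DirectSum.lof A T (fun p => M p ⊗[k] C p) p (x ⊗ₜ c))) : f = g := by
  apply DirectSum.linearMap_ext
  intro p
  ext t
  rw [LinearMap.comp_apply, LinearMap.comp_apply]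
  induction t using TensorProduct.induction_on with
  | zero => simp
  | tmul x c => exact h p x c
  | add a b ha hb => rw [map_add, map_add, map_add, ha, hb]

lemma gmap_comp (f : ∀ p, C p →ₗ[k] C' p) (g : ∀ p, C' p →ₗ[k] C'' p) :
    gmap A M (fun p => (g p).comp (f p)) = (gmap A M g).comp (gmap A M f) := by
  classical
  refine g_ext fun p x c => ?_
  simp only [LinearMap.comp_apply, gmap_of]

lemma gmap_id : gmap A M (fun p => (LinearMap.id : C p →ₗ[k] C p)) = LinearMap.id := by
  classical
  refine g_ext fun p x c => ?_
  simp only [gmap_of, LinearMap.id_apply]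

lemma gmap_zero : gmap A M (fun p => (0 : C p →ₗ[k] C' p)) = 0 := by
  classical
  refine g_ext fun p x c => ?_
  simp only [gmap_of, LinearMap.zero_apply, TensorProduct.tmul_zero, map_zero]

lemma gmap_add (f g : ∀ p, C p →ₗ[k] C' p) :
    gmap A M (fun p => f p + g p) = gmap A M f + gmap A M g := by
  classical
  refine g_ext fun p x c => ?_
  simp only [gmap_of, LinearMap.add_apply, TensorProduct.tmul_add, map_add]

/-- `gmap` of coordinate spaces. -/
noncomputable def gfin (b : T → ℕ) :
    (⨁ p, M p ⊗[k] (Fin (b p) → k)) ≃ₗ[A] ⨁ p, (Fin (b p) → M p) :=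
  DFinsupp.mapRange.linearEquiv fun p => TensorProduct.piScalarRight k A (M p) (Fin (b p))

end GFunctor

section Roos

open TensorProduct

set_option linter.unusedSectionVars false

variable {k A : Type} [Field k] [CommRing A] [Algebra k A]
  {P : Type} [PartialOrder P] [DecidableEq P]
  (D : PDiagram P A) [∀ p, Module k (D.obj p)] [∀ p, IsScalarTower k A (D.obj p)]
  (T : P → Prop)

/-- Prepend `p` to a chain above `p`. -/
def chainCons (p : P) {m : ℕ} (c : pchains {q : P // p < q} m) : pchains P (m + 1) :=
  ⟨Fin.cons p (fun i => (c.1 i).1), by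
    intro a b hab
    induction a using Fin.cases with
    | zero =>
      induction b using Fin.cases with
      | zero => exact absurd hab (lt_irrefl _)
      | succ b => simpa using (c.1 b).2
    | succ a =>
      induction b using Fin.cases with
      | zero => exact absurd hab (by simp)
      | succ b => simpa using c.2 (by simpa using hab)⟩

lemma chainCons_le (p : P) {m : ℕ} (c : pchains {q : P // p < q} m) :
    p ≤ (chainCons p c).1 0 := le_rfl

/-- The tail of a chain. -/
def chainTail {m : ℕ} (c : pchains P (m + 1)) : pchains {q : P // c.1 0 < q} m :=
  ⟨fun i => ⟨c.1 i.succ, c.2 (Fin.succ_pos i)⟩, fun _ _ h => c.2 (Fin.succ_lt_succ_iff.2 h)⟩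

lemma chainCons_tail {m : ℕ} (c : pchains P (m + 1)) : chainCons (c.1 0) (chainTail c) = c := by
  apply Subtype.ext
  funext i
  induction i using Fin.cases with
  | zero => rfl
  | succ i => rfl

/-- Deletion of a vertex. -/
abbrev chainDel {Q : Type} [Preorder Q] {m : ℕ} (c : pchains Q (m + 1)) (i : Fin (m + 1)) :
    pchains Q m :=
  ⟨c.1 ∘ i.succAbove, c.2.comp (Fin.strictMono_succAbove i)⟩

lemma chainDel_cons (p : P) {m : ℕ} (c : pchains {q : P // p < q} (m + 1)) (i : Fin (m + 1)) :
    chainDel (chainCons p c) i.succ = chainCons p (chainDel c i) := by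
  apply Subtype.ext
  funext l
  induction l using Fin.cases with
  | zero => simp [chainCons]
  | succ l => simp [chainCons]

/-- Single with transported value. -/
noncomputable def rs {m : ℕ} (c : pchains P (m + 1)) {p : P} (h : p ≤ c.1 0) :
    D.obj p →ₗ[A] roosC D m :=
  (DFinsupp.lsingle (M := fun c : pchains P (m + 1) => D.obj (c.1 0)) c).comp (D.map h)

lemma rs_congr {m : ℕ} {c c' : pchains P (m + 1)} (hc : c = c') {p : P} (h : p ≤ c.1 0)
    (h' : p ≤ c'.1 0) (x : D.obj p) : rs D c h x = rs D c' h' x := by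
  subst hc; rfl

lemma rs_refl {m : ℕ} (c : pchains P (m + 1)) (x : D.obj (c.1 0)) :
    rs D c le_rfl x = DFinsupp.single c x := by
  simp [rs, D.map_id]

lemma roosBdry_rs (m : ℕ) (c : pchains P (m + 2)) {p : P} (h : p ≤ c.1 0) (x : D.obj p) :
    roosBdry D m (rs D c h x) = ∑ i : Fin (m + 2), ((-1 : A) ^ (i : ℕ)) •
      rs D (chainDel c i) (h.trans (c.2.monotone (Fin.zero_le (i.succAbove 0)))) x := by
  simp only [roosBdry, rs, LinearMap.comp_apply, DFinsupp.lsingle_apply]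
  rw [DFinsupp.lsum_single]
  simp only [LinearMap.sum_apply, LinearMap.smul_apply, LinearMap.comp_apply]
  refine Finset.sum_congr rfl fun i _ => ?_
  rw [← D.map_comp]
  rfl

/-- The comparison map on one summand. -/
noncomputable def psiAux (m : ℕ) (p : P) :
    D.obj p ⊗[k] (pchains {q : P // p < q} m →₀ k) →ₗ[A] roosC D m :=
  (Finsupp.lsum ℕ fun c => rs D (chainCons p c) (chainCons_le p c)).comp
    (TensorProduct.finsuppScalarRight k A (D.obj p) (pchains {q : P // p < q} m)).toLinearMap

variable (k) in
/-- The comparison map. -/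
noncomputable def psi (m : ℕ) :
    (⨁ p : {p : P // T p}, D.obj p.1 ⊗[k] (pchains {q : P // p.1 < q} m →₀ k))
      →ₗ[A] roosC D m :=
  DirectSum.toModule A _ _ fun p => psiAux D m p.1

lemma psi_of (m : ℕ) (p : {p : P // T p}) (x : D.obj p.1) (c : pchains {q : P // p.1 < q} m) :
    psi k D T m (DirectSum.lof A {p : P // T p}
      (fun p => D.obj p.1 ⊗[k] (pchains {q : P // p.1 < q} m →₀ k)) p
      (x ⊗ₜ Finsupp.single c 1)) = rs D (chainCons p.1 c) (chainCons_le p.1 c) x := by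
  rw [psi, DirectSum.toModule_lof, psiAux, LinearMap.comp_apply, LinearEquiv.coe_coe,
    TensorProduct.finsuppScalarRight_apply_tmul]
  simp

variable (k) in
open Classical in
/-- The inverse comparison map. -/
noncomputable def phi (m : ℕ) : roosC D m →ₗ[A]
    (⨁ p : {p : P // T p}, D.obj p.1 ⊗[k] (pchains {q : P // p.1 < q} m →₀ k)) :=
  DFinsupp.lsum ℕ fun c => if h : T (c.1 0) then
    (DirectSum.lof A {p : P // T p}
      (fun p => D.obj p.1 ⊗[k] (pchains {q : P // p.1 < q} m →₀ k)) ⟨c.1 0, h⟩).comp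
      ((TensorProduct.AlgebraTensorModule.mk k A (D.obj (c.1 0))
        (pchains {q : P // c.1 0 < q} m →₀ k)).flip (Finsupp.single (chainTail c) 1))
    else 0

lemma phi_single (m : ℕ) (c : pchains P (m + 1)) (h : T (c.1 0)) (x : D.obj (c.1 0)) :
    phi k D T m (DFinsupp.single c x) = DirectSum.lof A {p : P // T p}
      (fun p => D.obj p.1 ⊗[k] (pchains {q : P // p.1 < q} m →₀ k)) ⟨c.1 0, h⟩
      (x ⊗ₜ Finsupp.single (chainTail c) 1) := by
  rw [phi, DFinsupp.lsum_single, dif_pos h]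
  rfl

lemma g_ext_single {m : ℕ} {Y : Type} [AddCommGroup Y] [Module A Y]
    {f g : (⨁ p : {p : P // T p}, D.obj p.1 ⊗[k] (pchains {q : P // p.1 < q} m →₀ k)) →ₗ[A] Y}
    (h : ∀ (p : {p : P // T p}) (x : D.obj p.1) (c : pchains {q : P // p.1 < q} m),
      f (DirectSum.lof A {p : P // T p}
        (fun p => D.obj p.1 ⊗[k] (pchains {q : P // p.1 < q} m →₀ k)) p
        (x ⊗ₜ Finsupp.single c 1)) =
      g (DirectSum.lof A {p : P // T p}
        (fun p => D.obj p.1 ⊗[k] (pchains {q : P // p.1 < q} m →₀ k)) p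
        (x ⊗ₜ Finsupp.single c 1))) : f = g := by
  refine g_ext (M := fun p : {p : P // T p} => D.obj p.1) fun p x c => ?_
  induction c using Finsupp.induction_linear with
  | zero => simp
  | add a b ha hb => rw [TensorProduct.tmul_add, map_add, map_add, map_add, ha, hb]
  | single c r =>
    have : (x ⊗ₜ[k] Finsupp.single c r : D.obj p.1 ⊗[k] (pchains {q : P // p.1 < q} m →₀ k))
        = (r • x) ⊗ₜ Finsupp.single c 1 := by
      rw [TensorProduct.smul_tmul, Finsupp.smul_single, smul_eq_mul, mul_one]
    rw [this]
    exact h p (r • x) c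

lemma phi_psi (m : ℕ) : (phi k D T m).comp (psi k D T m) = LinearMap.id := by
  refine g_ext_single D T fun p x c => ?_
  rw [LinearMap.comp_apply, psi_of, LinearMap.id_apply]
  have h : rs D (chainCons p.1 c) (chainCons_le p.1 c) x = DFinsupp.single (chainCons p.1 c) x :=
    rs_refl D (chainCons p.1 c) x
  exact (congrArg _ h).trans (phi_single D T m (chainCons p.1 c) p.2 x)

lemma psi_phi (hT : ∀ p, ¬ T p → Subsingleton (D.obj p)) (m : ℕ) :
    (psi k D T m).comp (phi k D T m) = LinearMap.id := by
  apply DFinsupp.lhom_ext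
  intro c x
  rw [LinearMap.comp_apply, LinearMap.id_apply]
  by_cases h : T (c.1 0)
  · rw [phi_single D T m c h, psi_of, ← rs_refl]
    exact rs_congr D (chainCons_tail c) _ _ x
  · have := hT _ h
    rw [Subsingleton.elim x 0]
    simp

lemma sgn_smul {V : Type} [AddCommGroup V] [Module k V] [Module A V] (i : ℕ) (v : V) :
    ((-1 : k) ^ i) • v = ((-1 : A) ^ i) • v := by
  rcases Nat.even_or_odd i with h | h
  · simp [h.neg_one_pow]
  · simp [h.neg_one_pow]

lemma roosBdry_psi (hmap : ∀ (p q : P) (h : p < q) (x : D.obj p), D.map h.le x = 0) (m : ℕ) :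
    (roosBdry D m).comp (psi k D T (m + 1)) = (psi k D T m).comp
      (gmap A (fun p : {p : P // T p} => D.obj p.1)
        (fun p => - simpBdry k k {q : P // p.1 < q} m)) := by
  refine g_ext_single D T fun p x c => ?_
  rw [LinearMap.comp_apply, psi_of, LinearMap.comp_apply]
  erw [gmap_of (M := fun p : {p : P // T p} => D.obj p.1)]
  rw [roosBdry_rs, Fin.sum_univ_succ]
  have h0 : rs D (chainDel (chainCons p.1 c) 0) ((chainCons_le p.1 c).trans
      ((chainCons p.1 c).2.monotone (Fin.zero_le ((0 : Fin (m + 2)).succAbove 0)))) x = 0 := by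
    have hlt : p.1 < (chainDel (chainCons p.1 c) 0).1 0 := (c.1 0).2
    have := hmap _ _ hlt x
    rw [rs, LinearMap.comp_apply, this, map_zero]
  rw [h0, smul_zero, zero_add]
  have hs : (-simpBdry k k {q : P // p.1 < q} m) (Finsupp.single c 1) =
      ∑ i : Fin (m + 1), (-((-1 : k) ^ (i : ℕ))) • Finsupp.single (chainDel c i) 1 := by
    rw [LinearMap.neg_apply, simpBdry, Finsupp.lsum_single, LinearMap.sum_apply,
      ← Finset.sum_neg_distrib]
    refine Finset.sum_congr rfl fun i _ => ?_
    rw [neg_smul]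
    rfl
  rw [hs, TensorProduct.tmul_sum, map_sum, map_sum]
  refine Finset.sum_congr rfl fun i _ => ?_
  have h1 : (x ⊗ₜ[k] (-((-1 : k) ^ (i : ℕ)) • Finsupp.single (chainDel c i) 1) :
      D.obj p.1 ⊗[k] (pchains {q : P // p.1 < q} m →₀ k)) =
      ((-1 : A) ^ ((i.succ : Fin (m + 2)) : ℕ)) • (x ⊗ₜ[k] Finsupp.single (chainDel c i) 1) := by
    rw [← sgn_smul (k := k), TensorProduct.tmul_smul, Fin.val_succ, pow_succ, mul_neg_one]
  rw [h1, map_smul, map_smul, psi_of]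
  congr 1
  exact rs_congr D (chainDel_cons p.1 c i) _ _ x

end Roos

section SimpDD

lemma simpBdry_single (k : Type) [Field k] (Q : Type) [Preorder Q] (m : ℕ)
    (c : pchains Q (m + 1)) (x : k) :
    simpBdry k k Q m (Finsupp.single c x) =
      ∑ i : Fin (m + 1), ((-1 : k) ^ (i : ℕ)) • Finsupp.single (chainDel c i) x := by
  rw [simpBdry, Finsupp.lsum_single, LinearMap.sum_apply]
  rfl

lemma simpBdry_simpBdry (k : Type) [Field k] (Q : Type) [Preorder Q] (m : ℕ)
    (x : pchains Q (m + 2) →₀ k) : simpBdry k k Q m (simpBdry k k Q (m + 1) x) = 0 := by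
  induction x using Finsupp.induction_linear with
  | zero => simp
  | add a b ha hb => rw [map_add, map_add, ha, hb, add_zero]
  | single c x =>
    simp only [simpBdry_single, map_sum, map_smul, Finset.smul_sum, smul_smul]
    rw [← Finset.sum_product']
    refine Finset.sum_involution
      (fun ij _ => (ij.1.succAbove ij.2, ij.2.predAbove ij.1)) ?_ ?_ ?_ ?_
    · rintro ⟨i, j⟩ -
      have h1 : chainDel (chainDel c (i.succAbove j)) (j.predAbove i) =
          chainDel (chainDel c i) j := by
        apply Subtype.ext
        funext l
        simp only [Function.comp]
        rw [Fin.succAbove_succAbove_succAbove_predAbove]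
      simp only [h1]
      rw [← pow_add, ← pow_add, Fin.neg_one_pow_succAbove_add_predAbove, neg_smul, add_neg_cancel]
    · rintro ⟨i, j⟩ - - h
      exact Fin.succAbove_ne i j (congrArg Prod.fst h)
    · intros; simp
    · rintro ⟨i, j⟩ -
      simp only [Fin.succAbove_succAbove_predAbove, Fin.predAbove_predAbove_succAbove]

end SimpDD

section RoosMain

open TensorProduct

set_option linter.unusedSectionVars false

variable {k A : Type} [Field k] [CommRing A] [Algebra k A]
  {P : Type} [PartialOrder P] [DecidableEq P] [Fintype P]
  (D : PDiagram P A) [∀ p, Module k (D.obj p)] [∀ p, IsScalarTower k A (D.obj p)]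
  (T : P → Prop)

instance pchains_finite (Q : Type) [Preorder Q] [Finite Q] (m : ℕ) : Finite (pchains Q m) :=
  inferInstanceAs (Finite {f : Fin m → Q // StrictMono f})

set_option maxHeartbeats 1600000 in
lemma roos_aux (hT : ∀ p, ¬ T p → Subsingleton (D.obj p))
    (hmap : ∀ (p q : P) (h : p < q) (x : D.obj p), D.map h.le x = 0) (i : ℕ)
    (C'' : {p : P // T p} → Type) [∀ p, AddCommGroup (C'' p)] [∀ p, Module k (C'' p)]
    (d : ∀ p : {p : P // T p}, (pchains {q : P // p.1 < q} i →₀ k) →ₗ[k] C'' p)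
    (X'' : Type) [AddCommGroup X''] [Module A X''] (dd : roosC D i →ₗ[A] X'')
    (psi'' : (⨁ p : {p : P // T p}, D.obj p.1 ⊗[k] C'' p) →ₗ[A] X'')
    (phi'' : X'' →ₗ[A] ⨁ p : {p : P // T p}, D.obj p.1 ⊗[k] C'' p)
    (h'' : phi''.comp psi'' = LinearMap.id)
    (hd : ∀ p x, d p (simpBdry k k {q : P // p.1 < q} i x) = 0)
    (hdd : dd.comp (psi k D T i) = psi''.comp
      (gmap A (fun p : {p : P // T p} => D.obj p.1) (fun p => - d p)))
    (hker : ∀ p : {p : P // T p}, simpCycles k k {q : P // p.1 < q} i = LinearMap.ker (d p))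
    (hker' : roosCycles D i = LinearMap.ker dd) :
    Nonempty (roosHomology D i ≃ₗ[A] ⨁ p : {p : P // T p},
      (Fin (Module.finrank k (simpHomology k k {q : P // p.1 < q} i)) → D.obj p.1)) := by
  choose π q s s' h1 h2 h3 h4 using fun p : {p : P // T p} =>
    aux_split (simpBdry k k {q : P // p.1 < q} i) (d p) (hd p) _ (hker p)
  let M : {p : P // T p} → Type := fun p => D.obj p.1
  let G := gfin (k := k) (A := A) (M := M)
    (fun p => Module.finrank k (simpHomology k k {q : P // p.1 < q} i))
  have hpp : ∀ m x, psi k D T m (phi k D T m x) = x := fun m x =>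
    LinearMap.congr_fun (psi_phi D T hT m) x
  have hpp' : ∀ m x, phi k D T m (psi k D T m x) = x := fun m x =>
    LinearMap.congr_fun (phi_psi D T m) x
  have hb : ∀ x, roosBdry D i (psi k D T (i + 1) x) = psi k D T i (gmap A M
        (fun p => - simpBdry k k {q : P // p.1 < q} i) x) := fun x =>
    LinearMap.congr_fun (roosBdry_psi D T hmap i) x
  have hb'' : ∀ x, dd (psi k D T i x) = psi'' (gmap A M (fun p => - d p) x) := fun x =>
    LinearMap.congr_fun hdd x
  refine aux_homology (roosBdry D i) dd _ hker'
    (G.toLinearMap.comp ((gmap A M π).comp (phi k D T i)))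
    ((psi k D T i).comp ((gmap A M q).comp G.symm.toLinearMap))
    ((psi k D T (i + 1)).comp ((gmap A M (fun p => - s p)).comp (phi k D T i)))
    ((psi k D T i).comp ((gmap A M (fun p => - s' p)).comp phi'')) ?_ ?_ ?_ ?_
  · intro y
    have : (gmap A M π).comp (gmap A M q) = LinearMap.id := by
      rw [← gmap_comp]
      simp only [h1]
      exact gmap_id
    have h := LinearMap.congr_fun this (G.symm y)
    simp only [LinearMap.comp_apply, LinearEquiv.coe_coe, LinearMap.id_apply] at h ⊢
    rw [hpp', h, LinearEquiv.apply_symm_apply]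
  · intro y
    have : (gmap A M (fun p => - d p)).comp (gmap A M q) = 0 := by
      rw [← gmap_comp]
      simp only [LinearMap.neg_comp, h2, neg_zero]
      exact gmap_zero
    have h := LinearMap.congr_fun this (G.symm y)
    simp only [LinearMap.comp_apply, LinearEquiv.coe_coe, LinearMap.zero_apply] at h ⊢
    rw [hb'', h, map_zero]
  · intro x
    have : (gmap A M π).comp (gmap A M (fun p => - simpBdry k k {q : P // p.1 < q} i)) = 0 := by
      rw [← gmap_comp]
      simp only [LinearMap.comp_neg, h3, neg_zero]
      exact gmap_zero
    have h := LinearMap.congr_fun this (phi k D T (i + 1) x)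
    simp only [LinearMap.comp_apply, LinearEquiv.coe_coe, LinearMap.zero_apply] at h ⊢
    rw [← hpp (i + 1) x, hb, hpp', h, map_zero]
  · intro x
    have e : (LinearMap.id : (⨁ p : {p : P // T p},
        M p ⊗[k] (pchains {q : P // p.1 < q} i →₀ k)) →ₗ[A] _) =
        (gmap A M q).comp (gmap A M π) +
        (gmap A M (fun p => - simpBdry k k {q : P // p.1 < q} i)).comp
          (gmap A M (fun p => - s p)) +
        (gmap A M (fun p => - s' p)).comp (gmap A M (fun p => - d p)) := by
      rw [← gmap_comp, ← gmap_comp, ← gmap_comp, ← gmap_add, ← gmap_add, ← gmap_id]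
      congr 1
      funext p
      simp only [LinearMap.comp_neg, LinearMap.neg_comp, neg_neg]
      exact h4 p
    have h := congrArg (psi k D T i) (LinearMap.congr_fun e (phi k D T i x))
    simp only [LinearMap.comp_apply, LinearEquiv.coe_coe, LinearMap.id_apply,
      LinearMap.add_apply, map_add] at h ⊢
    have h5 : phi'' (dd x) = gmap A M (fun p => - d p) (phi k D T i x) := by
      conv_lhs => rw [← hpp i x, hb'']
      exact LinearMap.congr_fun h'' _
    rw [hb, LinearEquiv.symm_apply_apply, h5, ← h, hpp]

lemma roos_main (hT : ∀ p, ¬ T p → Subsingleton (D.obj p))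
    (hmap : ∀ (p q : P) (h : p < q) (x : D.obj p), D.map h.le x = 0) (i : ℕ) :
    Nonempty (roosHomology D i ≃ₗ[A] ⨁ p : {p : P // T p},
      (Fin (Module.finrank k (simpHomology k k {q : P // p.1 < q} i)) → D.obj p.1)) := by
  cases i with
  | zero =>
    refine roos_aux D T hT hmap 0 (fun p => (pchains {q : P // p.1 < q} 0 →₀ k)) (fun p => 0)
      (roosC D 0) 0 (psi k D T 0) (phi k D T 0) (phi_psi D T 0) (fun p x => rfl) ?_ ?_ ?_
    · have h0 : (fun p : {p : P // T p} => - (0 : (pchains {q : P // p.1 < q} 0 →₀ k) →ₗ[k]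
          (pchains {q : P // p.1 < q} 0 →₀ k))) = fun p => 0 := funext fun p => LinearMap.ext fun x => by simp
      have := gmap_zero (k := k) (A := A) (M := fun p : {p : P // T p} => D.obj p.1)
        (C := fun p : {p : P // T p} => (pchains {q : P // p.1 < q} 0 →₀ k))
        (C' := fun p : {p : P // T p} => (pchains {q : P // p.1 < q} 0 →₀ k))
      rw [h0, this, LinearMap.zero_comp, LinearMap.comp_zero]
    · intro p; simp [simpCycles]
    · simp [roosCycles]
  | succ i =>
    exact roos_aux D T hT hmap (i + 1) (fun p => (pchains {q : P // p.1 < q} i →₀ k))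
      (fun p => simpBdry k k {q : P // p.1 < q} i)
      (roosC D i) (roosBdry D i) (psi k D T i) (phi k D T i) (phi_psi D T i)
      (fun p x => simpBdry_simpBdry k _ i x) (roosBdry_psi D T hmap i) (fun p => rfl) rfl

end RoosMain
section Vanish

open CategoryTheory Limits Opposite

lemma old_ext_isZero {R : Type} [CommRing R] (X Y : ModuleCat.{0} R) (r : ℕ)
    (h : Subsingleton (Abelian.Ext X Y r)) :
    IsZero (((Ext R (ModuleCat.{0} R) r).obj (op X)).obj Y) := by
  let Q := projectiveResolution X
  refine IsZero.of_iso ?_ (Q.isoExt r Y)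
  rw [← HomologicalComplex.exactAt_iff_isZero_homology]
  cases r with
  | zero =>
    rw [HomologicalComplex.exactAt_iff' _ 0 0 1 (by simp) (by simp),
      ShortComplex.moduleCat_exact_iff]
    intro (f : Q.complex.X 0 ⟶ Y) hf
    have hf' : Q.complex.d 1 0 ≫ f = 0 := hf
    have hs : Subsingleton (X ⟶ Y) := Abelian.Ext.homEquiv₀.symm.subsingleton
    refine ⟨0, ?_⟩
    obtain ⟨g, hg⟩ : ∃ g : X ⟶ Y, Q.π.f 0 ≫ g = f :=
      ⟨Q.exact₀.desc f hf', Q.exact₀.g_desc f hf'⟩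
    have hg0 : f = 0 := by
      rw [← hg]
      obtain rfl : g = 0 := Subsingleton.elim _ _
      exact comp_zero
    rw [map_zero]
    exact hg0.symm
  | succ r =>
    rw [HomologicalComplex.exactAt_iff' _ r (r+1) (r+2) (by simp) (by simp),
      ShortComplex.moduleCat_exact_iff]
    intro (f : Q.complex.X (r+1) ⟶ Y) hf
    have hf' : Q.complex.d (r+2) (r+1) ≫ f = 0 := hf
    obtain ⟨g, hg⟩ := (Q.extMk_eq_zero_iff f (r+2) rfl hf' r rfl).1 (Subsingleton.elim _ _)
    exact ⟨g, hg⟩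

open RingTheory.Sequence in
lemma pd_quot {R : Type} [CommRing R] (rs : List R) (d : ℕ) (M : ModuleCat.{0} R)
    (hM : HasProjectiveDimensionLT M d) (reg : IsWeaklyRegular M rs) :
    HasProjectiveDimensionLT
      (ModuleCat.of R (M ⧸ Ideal.ofList rs • (⊤ : Submodule R M))) (d + rs.length) := by
  induction rs generalizing M d with
  | nil =>
    exact hasProjectiveDimensionLT_of_iso
      (Submodule.quotEquivOfEqBot (Ideal.ofList ([] : List R) • (⊤ : Submodule R M))
        (by simp)).symm.toModuleIso d
  | cons x rs ih =>
    rw [isWeaklyRegular_cons_iff] at reg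
    have hS := reg.1.smulShortComplex_shortExact
    have h3 := hS.hasProjectiveDimensionLT_X₃ d hM (hasProjectiveDimensionLT_of_ge M d (d+1) (by omega))
    have := ih (d + 1) (ModuleCat.of R (QuotSMulTop x M)) h3 reg.2
    rw [List.length_cons, show d + (rs.length + 1) = d + 1 + rs.length by omega]
    exact hasProjectiveDimensionLT_of_iso
      (Submodule.quotOfListConsSMulTopEquivQuotSMulTopInner M x rs).symm.toModuleIso _

open RingTheory.Sequence in
lemma new_ext_subsingleton {R : Type} [CommRing R] [IsNoetherianRing R] (rs : List R)
    (reg : IsRegular R rs) (r : ℕ) (hr : r ≠ rs.length) :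
    Subsingleton (Abelian.Ext (ModuleCat.of R (R ⧸ Ideal.ofList rs)) (ModuleCat.of R R) r) := by
  rcases lt_or_gt_of_ne hr with h | h
  · refine ModuleCat.subsingleton_ext_of_exists_isRegular (Ideal.ofList rs)
      (ModuleCat.of R (R ⧸ Ideal.ofList rs)) ?_ (ModuleCat.of R R) ?_ rs ?_ reg r h
    · rw [Module.support_eq_zeroLocus, Ideal.annihilator_quotient]
    · exact lt_top_iff_ne_top.2 (Ne.symm reg.2)
    · intro x hx
      exact Ideal.subset_span hx
  · have h1 : HasProjectiveDimensionLT (ModuleCat.of R R) 1 :=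
      projective_iff_hasProjectiveDimensionLT_one.1 inferInstance
    have h2 := pd_quot rs 1 (ModuleCat.of R R) h1 reg.1
    have h3 : HasProjectiveDimensionLT (ModuleCat.of R (R ⧸ Ideal.ofList rs)) (1 + rs.length) :=
      hasProjectiveDimensionLT_of_iso (Submodule.quotEquivOfEq
        (Ideal.ofList rs • (⊤ : Submodule R R)) (Ideal.ofList rs) (by simp)).toModuleIso _
    exact HasProjectiveDimensionLT.subsingleton _ (1 + rs.length) _ (by omega) _

open RingTheory.Sequence localCohomology in
lemma lc_vanish {R : Type} [CommRing R] [IsNoetherianRing R] (I : Ideal R) (h r : ℕ) (hr : r ≠ h)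
    (hs : ∀ t, 1 ≤ t → ∃ rs : List R, rs.length = h ∧ IsRegular R rs ∧ Ideal.ofList rs ≤ I ^ t ∧
      I ≤ (Ideal.ofList rs).radical) :
    IsZero ((localCohomology I r).obj (ModuleCat.of R R)) := by
  have key : ∀ t : ℕᵒᵖᵒᵖ, (colimit.ι (diagram (idealPowersDiagram I) r) t).app
      (ModuleCat.of R R) = 0 := by
    intro t
    set s := t.unop.unop with hsdef
    obtain ⟨rs, hl, hreg, h1, h2⟩ := hs (s + 1) (by omega)
    obtain ⟨N, hN⟩ := Ideal.exists_pow_le_of_le_radical_of_fg h2 (IsNoetherian.noetherian I)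
    let s' : ℕᵒᵖᵒᵖ := op (op (max N s))
    let f : t ⟶ s' := (homOfLE (le_max_right N s)).op.op
    have hf := colimit.w (diagram (idealPowersDiagram I) r) f
    rw [← hf, NatTrans.comp_app]
    have h3 : Ideal.ofList rs ≤ I ^ s := h1.trans (Ideal.pow_le_pow_right (by omega))
    have h4 : I ^ (max N s) ≤ Ideal.ofList rs := (Ideal.pow_le_pow_right (by omega)).trans hN
    let a : ModuleCat.of R (R ⧸ I ^ (max N s)) ⟶ ModuleCat.of R (R ⧸ Ideal.ofList rs) :=
      ModuleCat.ofHom (Submodule.mapQ _ _ LinearMap.id h4)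
    let b : ModuleCat.of R (R ⧸ Ideal.ofList rs) ⟶ ModuleCat.of R (R ⧸ I ^ s) :=
      ModuleCat.ofHom (Submodule.mapQ _ _ LinearMap.id h3)
    have hab : (diagram (idealPowersDiagram I) r).map f =
        (Ext R (ModuleCat.{0} R) r).map b.op ≫ (Ext R (ModuleCat.{0} R) r).map a.op := by
      have e : (ringModIdeals (idealPowersDiagram I)).map f.unop = a ≫ b :=
        ModuleCat.hom_ext (LinearMap.ext fun x => by
          obtain ⟨y, rfl⟩ := Submodule.Quotient.mk_surjective _ x
          rfl)
      rw [← Functor.map_comp, ← op_comp, ← e]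
      rfl
    have hz := old_ext_isZero _ _ r (new_ext_subsingleton rs hreg r (by omega))
    rw [hab, NatTrans.comp_app, hz.eq_zero_of_tgt (((Ext R (ModuleCat.{0} R) r).map b.op).app _)]
    rw [zero_comp]
    exact zero_comp
  have hc := isColimitOfPreserves ((evaluation _ _).obj (ModuleCat.of R R))
    (colimit.isColimit (diagram (idealPowersDiagram I) r))
  change IsZero ((colimit (diagram (idealPowersDiagram I) r)).obj (ModuleCat.of R R))
  rw [IsZero.iff_id_eq_zero]
  refine hc.hom_ext fun t => ?_
  change (colimit.ι (diagram (idealPowersDiagram I) r) t).app (ModuleCat.of R R) ≫ _ =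
    (colimit.ι (diagram (idealPowersDiagram I) r) t).app (ModuleCat.of R R) ≫ _
  rw [key, zero_comp, zero_comp]

end Vanish
section Coord

open MvPolynomial RingTheory.Sequence

lemma mem_span_pow_X {k σ : Type*} [Field k] (t : ℕ) (s : Set σ) (a : σ) (ha : a ∉ s)
    (x : MvPolynomial σ k)
    (hx : X a ^ t * x ∈ Ideal.span ((fun l => (X l ^ t : MvPolynomial σ k)) '' s)) :
    x ∈ Ideal.span ((fun l => (X l ^ t : MvPolynomial σ k)) '' s) := by
  have e : (fun l => (X l ^ t : MvPolynomial σ k)) '' s =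
      (fun s => monomial s (1 : k)) '' ((fun l => Finsupp.single l t) '' s) := by
    rw [Set.image_image]
    refine Set.image_congr fun l _ => ?_
    rw [X_pow_eq_monomial]
  rw [e, mem_ideal_span_monomial_image] at hx ⊢
  intro d hd
  obtain ⟨_, ⟨l, hl, rfl⟩, h⟩ := hx (Finsupp.single a t + d) (by
    rw [mem_support_iff] at hd ⊢
    rwa [X_pow_eq_monomial, coeff_monomial_mul, one_mul])
  refine ⟨_, ⟨l, hl, rfl⟩, ?_⟩
  have hla : a ≠ l := fun h => ha (h ▸ hl)
  have h' := h l
  rw [Finsupp.single_le_iff]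
  simpa [Finsupp.single_apply, hla] using h'

lemma weaklyRegular_X {k τ : Type*} [Field k] (h t : ℕ) :
    IsWeaklyRegular (MvPolynomial (Fin h ⊕ τ) k)
      (List.ofFn fun i : Fin h => (X (Sum.inl i) ^ t : MvPolynomial (Fin h ⊕ τ) k)) := by
  rw [isWeaklyRegular_iff]
  intro i hi
  have hi' : i < h := by simpa using hi
  have e : Ideal.ofList (List.take i (List.ofFn fun i : Fin h =>
      (X (Sum.inl i) ^ t : MvPolynomial (Fin h ⊕ τ) k))) =
      Ideal.span ((fun l => (X l ^ t : MvPolynomial (Fin h ⊕ τ) k)) ''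
        (Sum.inl '' {j : Fin h | j.1 < i})) := by
    rw [Ideal.ofList]
    congr 1
    ext x
    simp only [Set.mem_ofPred_eq, Set.mem_image, List.mem_take_iff_getElem, exists_exists_and_eq_and]
    constructor
    · rintro ⟨j, hj, rfl⟩
      have hj' : j < h := by simp at hj; omega
      exact ⟨⟨j, hj'⟩, by simp at hj; simpa using hj.1, by simp⟩
    · rintro ⟨j, hj, rfl⟩
      exact ⟨j, by simp; omega, by simp⟩
  rw [e, isSMulRegular_iff_right_eq_zero_of_smul]
  intro x hx
  obtain ⟨y, rfl⟩ := Submodule.Quotient.mk_surjective _ x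
  rw [← Submodule.Quotient.mk_smul, Submodule.Quotient.mk_eq_zero] at hx
  rw [Submodule.Quotient.mk_eq_zero]
  simp only [smul_eq_mul, Ideal.mul_top, List.getElem_ofFn] at hx ⊢
  refine mem_span_pow_X t _ _ ?_ y hx
  simp

lemma regular_of_equiv {k τ R : Type*} [Field k] [CommRing R] (h t : ℕ) 
    (e : MvPolynomial (Fin h ⊕ τ) k ≃+* R) :
    IsWeaklyRegular R (List.ofFn fun i : Fin h => (e (X (Sum.inl i)) ^ t : R)) := by
  refine (AddEquiv.isWeaklyRegular_congr (e := e.toAddEquiv) ?_).1 (weaklyRegular_X (k := k) (τ := τ) h t)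
  rw [List.forall₂_iff_get]
  simp

lemma height_X {k τ : Type*} [Field k] [Finite τ] (h : ℕ) (I : Ideal (MvPolynomial (Fin h ⊕ τ) k))
    [I.IsPrime]
    (hI : I = Ideal.span (Set.range fun i : Fin h => (X (Sum.inl i)))) : I.height = h := by
  classical
  apply le_antisymm
  · refine (Ideal.height_le_card_of_mem_minimalPrimes_span
      (Set.finite_range fun i : Fin h => (X (Sum.inl i) : MvPolynomial (Fin h ⊕ τ) k)) (p := I)
      ?_).trans ?_
    · rw [← hI, Ideal.minimalPrimes_eq_subsingleton_self]
      rfl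
    · rw [← Set.image_univ]
      have := Set.ncard_image_le (f := fun i : Fin h => (X (Sum.inl i) :
        MvPolynomial (Fin h ⊕ τ) k)) (s := Set.univ) (Set.finite_univ)
      rw [Set.ncard_univ, Nat.card_fin] at this
      exact_mod_cast this
  · let ρ : ℕ → MvPolynomial (Fin h ⊕ τ) k →ₐ[k] MvPolynomial (Fin h ⊕ τ) k := fun m =>
      aeval (Sum.elim (fun i => if i.1 < m then 0 else X (Sum.inl i)) (fun j => X (Sum.inr j)))
    have hp : ∀ m, (RingHom.ker (ρ m)).IsPrime := fun m => RingHom.ker_isPrime _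
    have hlt : ∀ m, m < h → RingHom.ker (ρ m) < RingHom.ker (ρ (m+1)) := by
      intro m hm
      refine lt_of_le_of_ne ?_ ?_
      · have : ρ (m + 1) = (ρ (m+1)).comp (ρ m) := by
          apply MvPolynomial.algHom_ext
          rintro (i | j)
          · by_cases h1 : i.1 < m
            · simp [ρ, h1, h1.le]
            · simp [ρ, h1]
          · simp [ρ]
        intro x hx
        rw [RingHom.mem_ker] at hx ⊢
        rw [this, AlgHom.comp_apply, hx, map_zero]
      · intro heq
        have h1 : X (Sum.inl ⟨m, hm⟩) ∈ RingHom.ker (ρ (m+1)) := by simp [ρ, RingHom.mem_ker]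
        rw [← heq] at h1
        simp [ρ, RingHom.mem_ker] at h1
    have hh : ∀ m : ℕ, m ≤ h → (m : ℕ∞) ≤ (RingHom.ker (ρ m)).height := by
      intro m
      induction m with
      | zero => simp
      | succ m ih =>
        intro hm
        have := Ideal.height_add_one_le_of_lt_of_isPrime (hlt m hm)
        push_cast
        exact le_trans (by gcongr; exact ih (by omega)) this
    refine (hh h le_rfl).trans (Ideal.height_mono ?_)
    intro x hx
    have : (Ideal.Quotient.mkₐ k I).comp (ρ h) = Ideal.Quotient.mkₐ k I := by
      apply MvPolynomial.algHom_ext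
      rintro (i | j)
      · have : X (Sum.inl i) ∈ I := hI ▸ Ideal.subset_span ⟨i, rfl⟩
        simp [ρ]
        rw [eq_comm, Ideal.Quotient.eq_zero_iff_mem]
        exact this
      · simp [ρ]
    have h2 := AlgHom.congr_fun this x
    rw [RingHom.mem_ker] at hx
    rw [AlgHom.comp_apply, hx, map_zero] at h2
    exact Ideal.Quotient.eq_zero_iff_mem.1 h2.symm


lemma deg_one_eq {k : Type} [Field k] {n : ℕ} (f : MvPolynomial (Fin n) k)
    (hf : f.totalDegree ≤ 1) :
    f = C (coeff 0 f) + ∑ l, coeff (Finsupp.single l 1) f • X l := by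
  classical
  ext d
  simp only [coeff_add, coeff_C, coeff_sum, coeff_smul, coeff_X, smul_eq_mul, mul_ite, mul_one,
    mul_zero]
  by_cases hd : d = 0
  · subst hd
    simp
  · rw [if_neg (Ne.symm hd), zero_add]
    by_cases h1 : ∃ l, Finsupp.single l 1 = d
    · obtain ⟨l, rfl⟩ := h1
      simp [Finsupp.single_left_inj]
    · push Not at h1
      simp only [h1, if_false, Finset.sum_const_zero]
      by_contra hc
      have h2 := (le_totalDegree (mem_support_iff.2 hc)).trans hf
      rcases Nat.lt_or_ge (d.sum fun _ e => e) 1 with h3 | h3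
      · apply hd
        have h4 : d.degree = 0 := by
          have : d.degree = d.sum fun _ e => e := rfl
          omega
        exact (Finsupp.degree_eq_zero_iff d).1 h4
      · have h4 : d.degree = 1 := by
          have : d.degree = d.sum fun _ e => e := rfl
          omega
        obtain ⟨l, hl⟩ : ∃ l, d l ≠ 0 := by
          by_contra hcon
          push Not at hcon
          exact hd (Finsupp.ext hcon)
        have h5 : Finsupp.single l 1 ≤ d := by
          rw [Finsupp.single_le_iff]
          omega
        obtain ⟨d', rfl⟩ := exists_add_of_le h5
        rw [map_add, Finsupp.degree_single] at h4
        have h6 : d' = 0 := (Finsupp.degree_eq_zero_iff d').1 (by omega)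
        exact h1 l (by rw [h6, add_zero])

lemma exists_coord {k : Type} [Field k] {n : ℕ} (I : Ideal (MvPolynomial (Fin n) k))
    (hI : I.IsPrime) (S : Set (MvPolynomial (Fin n) k)) (hS : ∀ f ∈ S, f.totalDegree ≤ 1)
    (hIS : I = Ideal.span S) :
    ∃ (h m : ℕ) (e : MvPolynomial (Fin h ⊕ Fin m) k ≃+* MvPolynomial (Fin n) k),
      I = Ideal.span (Set.range fun i : Fin h => e (X (Sum.inl i))) := by
  classical
  let L : MvPolynomial (Fin n) k →ₗ[k] (Fin n → k) :=
    LinearMap.pi fun l => lcoeff k (Finsupp.single l 1)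
  let lin : (Fin n → k) →ₗ[k] MvPolynomial (Fin n) k := Fintype.linearCombination k X
  have hL : ∀ f : MvPolynomial (Fin n) k, f.totalDegree ≤ 1 → f = C (coeff 0 f) + lin (L f) :=
    fun f hf => deg_one_eq f hf
  have hlinL : ∀ v, L (lin v) = v := by
    intro v
    ext l
    simp [L, lin, Fintype.linearCombination_apply, coeff_X, Finsupp.single_left_inj]
  have hlind : ∀ v, (lin v).totalDegree ≤ 1 := by
    intro v
    simp only [lin, Fintype.linearCombination_apply]
    refine totalDegree_finsetSum_le fun l _ => (totalDegree_smul_le _ _).trans ?_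
    simp
  let V : Submodule k (MvPolynomial (Fin n) k) :=
    I.restrictScalars k ⊓ restrictTotalDegree (Fin n) k 1
  have hV : ∀ f, f ∈ V ↔ f ∈ I ∧ f.totalDegree ≤ 1 := by
    intro f
    simp [V, mem_restrictTotalDegree]
  have hV0 : ∀ f ∈ V, L f = 0 → f = 0 := by
    intro f hf h0
    have h1 := hL f ((hV f).1 hf).2
    rw [h0, map_zero, add_zero] at h1
    by_contra hne
    have hc : coeff 0 f ≠ 0 := fun h => hne (by rw [h1, h, C_0])
    refine hI.ne_top (Ideal.eq_top_of_isUnit_mem I ((hV f).1 hf).1 ?_)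
    rw [h1]
    exact (IsUnit.mk0 _ hc).map C
  let W : Submodule k (Fin n → k) := V.map L
  obtain ⟨W', hW'⟩ := W.exists_isCompl
  let B : Module.Basis (Fin (Module.finrank k W) ⊕ Fin (Module.finrank k W')) k (Fin n → k) :=
    ((Module.finBasis k W).prod (Module.finBasis k W')).map (W.prodEquivOfIsCompl W' hW')
  have hBl : ∀ i, B (Sum.inl i) = Module.finBasis k W i := by
    intro i
    simp [B]
  have hex : ∀ i, ∃ f ∈ V, L f = B (Sum.inl i) := by
    intro i
    rw [hBl]
    exact (Module.finBasis k W i).2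
  choose f hfV hfL using hex
  let g : Fin (Module.finrank k W) ⊕ Fin (Module.finrank k W') → MvPolynomial (Fin n) k :=
    Sum.elim f (fun j => lin (B (Sum.inr j)))
  have hgL : ∀ s, L (g s) = B s := by
    rintro (i | j)
    · exact hfL i
    · exact hlinL _
  have hgd : ∀ s, (g s).totalDegree ≤ 1 := by
    rintro (i | j)
    · exact ((hV _).1 (hfV i)).2
    · exact hlind _
  have hg : ∀ s, g s = C (coeff 0 (g s)) + lin (B s) := by
    intro s
    rw [← hgL]
    exact hL _ (hgd s)
  let c := fun s => coeff 0 (g s)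
  let φ : MvPolynomial (Fin (Module.finrank k W) ⊕ Fin (Module.finrank k W')) k →ₐ[k]
    MvPolynomial (Fin n) k := aeval g
  let μ : (Fin n → k) →ₗ[k]
      MvPolynomial (Fin (Module.finrank k W) ⊕ Fin (Module.finrank k W')) k :=
    B.constr k fun s => X s - C (c s)
  let ψ : MvPolynomial (Fin n) k →ₐ[k]
      MvPolynomial (Fin (Module.finrank k W) ⊕ Fin (Module.finrank k W')) k :=
    aeval fun l => μ (Pi.single l 1)
  have hφμ : φ.toLinearMap ∘ₗ μ = lin := by
    refine B.ext fun s => ?_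
    have h1 : μ (B s) = X s - C (c s) := B.constr_basis _ _ _
    have h2 : φ (X s - C (c s)) = g s - C (c s) := by
      rw [map_sub, aeval_X]
      congr 1
      exact aeval_C _ _
    rw [LinearMap.comp_apply, h1, AlgHom.toLinearMap_apply, h2, sub_eq_iff_eq_add, add_comm]
    exact hg s
  have hψlin : ψ.toLinearMap ∘ₗ lin = μ := by
    refine (Pi.basisFun k (Fin n)).ext fun l => ?_
    have h1 : lin (Pi.single l 1) = X l := by
      simp [lin]
    rw [LinearMap.comp_apply, Pi.basisFun_apply, h1, AlgHom.toLinearMap_apply]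
    exact aeval_X _ _
  have h12 : φ.comp ψ = AlgHom.id k _ := by
    apply MvPolynomial.algHom_ext
    intro l
    have h1 : lin (Pi.single l 1) = X l := by
      simp [lin]
    have h2 : ψ (X l) = μ (Pi.single l 1) := aeval_X _ _
    rw [AlgHom.comp_apply, h2, AlgHom.id_apply, ← h1]
    exact LinearMap.congr_fun hφμ _
  have h21 : ψ.comp φ = AlgHom.id k _ := by
    apply MvPolynomial.algHom_ext
    intro s
    have h2 : φ (X s) = g s := aeval_X _ _
    have h3 : ψ (lin (B s)) = μ (B s) := LinearMap.congr_fun hψlin _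
    have h4 : μ (B s) = X s - C (c s) := B.constr_basis _ _ _
    have h5 : ψ (C (coeff 0 (g s))) = C (c s) := aeval_C _ _
    rw [AlgHom.comp_apply, h2, AlgHom.id_apply, hg s, map_add, h3, h4, h5]
    ring
  refine ⟨_, _, (AlgEquiv.ofAlgHom φ ψ h12 h21).toRingEquiv, ?_⟩
  have hφX : ∀ i, (AlgEquiv.ofAlgHom φ ψ h12 h21).toRingEquiv (X (Sum.inl i)) = f i := by
    intro i
    exact aeval_X _ _
  simp only [hφX]
  apply le_antisymm
  · rw [hIS, Ideal.span_le]
    intro p hp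
    have hpV : p ∈ V := (hV p).2 ⟨hIS ▸ Ideal.subset_span hp, hS p hp⟩
    have hpW : L p ∈ W := Submodule.mem_map_of_mem hpV
    let a := (Module.finBasis k W).repr ⟨L p, hpW⟩
    have ha : L p = ∑ i, a i • L (f i) := by
      have := (Module.finBasis k W).sum_repr ⟨L p, hpW⟩
      have := congrArg (W.subtype) this
      simp only [map_sum, map_smul] at this
      simp only [hfL, hBl]
      exact this.symm
    have h0 : p - ∑ i, a i • f i = 0 := by
      refine hV0 _ (V.sub_mem hpV (V.sum_mem fun i _ => V.smul_mem _ (hfV i))) ?_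
      rw [map_sub, map_sum, ha]
      simp only [map_smul, sub_self]
    rw [sub_eq_zero] at h0
    rw [h0]
    refine Ideal.sum_mem _ fun i _ => ?_
    rw [smul_eq_C_mul]
    exact Ideal.mul_mem_left _ _ (Ideal.subset_span ⟨i, rfl⟩)
  · rw [Ideal.span_le]
    rintro _ ⟨i, rfl⟩
    exact ((hV _).1 (hfV i)).1

end Coord
section Final

open MvPolynomial CategoryTheory

lemma idealHeight_prime {R : Type*} [CommRing R] (I : Ideal R) [hI : I.IsPrime] :
    idealHeight I = I.height := by
  have h1 := PrimeSpectrum.height_eq_orderHeight (⟨I, hI⟩ : PrimeSpectrum R)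
  unfold idealHeight
  have hI' : I ∈ I.minimalPrimes := by
    rw [Ideal.minimalPrimes_eq_subsingleton_self]; rfl
  rw [h1]
  apply le_antisymm
  · exact iInf_le_of_le ⟨I, hI'⟩ le_rfl
  · refine le_iInf ?_
    rintro ⟨p, hp⟩
    have hp2 := hp
    rw [Ideal.minimalPrimes_eq_subsingleton_self] at hp2
    obtain rfl : p = I := hp2
    exact le_rfl

lemma LC_subsingleton {k : Type} [Field k] {n : ℕ} (I : Ideal (MvPolynomial (Fin n) k))
    (hI : I.IsPrime) (S : Set (MvPolynomial (Fin n) k)) (hS : ∀ f ∈ S, f.totalDegree ≤ 1)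
    (hIS : I = Ideal.span S) (r : ℕ) (hr : I.height ≠ r) :
    Subsingleton (LC k I r) := by
  obtain ⟨h, m, e, he⟩ := exists_coord I hI S hS hIS
  have hmem : ∀ i, e (X (Sum.inl i)) ∈ I := fun i => he ▸ Ideal.subset_span ⟨i, rfl⟩
  have hheight : I.height = h := by
    have hp : (I.comap e).IsPrime := Ideal.comap_isPrime e I
    rw [← RingEquiv.height_comap e I]
    refine height_X h _ ?_
    have h1 : I = Ideal.map e (Ideal.span (Set.range fun i : Fin h => (X (Sum.inl i)))) := by
      rw [Ideal.map_span, ← Set.range_comp]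
      exact he
    rw [h1]
    exact Ideal.comap_map_of_bijective e e.bijective
  have hz : Limits.IsZero ((localCohomology I r).obj (ModuleCat.of (MvPolynomial (Fin n) k)
      (MvPolynomial (Fin n) k))) := by
    refine lc_vanish I h r (fun hh => hr (by rw [hheight, hh])) fun t ht => ?_
    have hle : Ideal.ofList (List.ofFn fun i : Fin h => (e (X (Sum.inl i)) ^ t)) ≤ I ^ t := by
      rw [Ideal.ofList, Ideal.span_le]
      intro x hx
      simp only [List.mem_ofFn, Set.mem_ofPred_eq] at hx
      obtain ⟨i, rfl⟩ := hx
      exact Ideal.pow_mem_pow (hmem i) t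
    refine ⟨_, List.length_ofFn, ⟨regular_of_equiv h t e, ?_⟩, hle, ?_⟩
    · intro htop
      rw [smul_eq_mul, Ideal.mul_top] at htop
      refine hI.ne_top (top_le_iff.1 ?_)
      rw [htop]
      exact hle.trans (Ideal.pow_le_self (by omega))
    · conv_lhs => rw [he]
      rw [Ideal.span_le]
      rintro _ ⟨i, rfl⟩
      refine ⟨t, Ideal.subset_span ?_⟩
      simp
  exact ModuleCat.subsingleton_of_isZero hz

end Final

/-- For an arrangement `X ⊆ 𝔸ⁿ_k` of linear varieties with intersection poset `P`, the `i`-th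
left derived functor of the colimit over `P` of the diagram `H^j_{[*]}(R) : p ↦ H^j_{I_p}(R)`
(computed as Roos complex homology) is isomorphic to
`⊕_{h(p) = j} H^j_{I_p}(R)^{⊕ b_{i,p}}` with `b_{i,p} = dim_k H̃_{i-1}(K(>p); k)`. -/
theorem stmt_17 (n : ℕ) (k : Type) [Field k]
    (P : Type) [PartialOrder P] [Fintype P] [DecidableEq P]
    (ι : P → Ideal (MvPolynomial (Fin n) k))
    -- ordered by inclusion of the corresponding linear subvarieties
    (horder : ∀ p q : P, p ≤ q ↔ ι q ≤ ι p)
    -- each `I_p` is the (prime, radical) defining ideal of a linear subvariety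
    (hlin : ∀ p : P, (ι p).IsPrime ∧
      ∃ S : Set (MvPolynomial (Fin n) k),
        (∀ f ∈ S, f.totalDegree ≤ 1) ∧ ι p = Ideal.span S)
    -- `h(p)` is the codimension of the subvariety `X_p`, i.e. the height of `I_p`
    (ht : P → ℕ) (hht : ∀ p : P, idealHeight (ι p) = (ht p : ℕ∞))
    (j : ℕ)
    -- the diagram `H^j_{[*]}(R)` over `P`
    (D : PDiagram P (MvPolynomial (Fin n) k))
    (eD : ∀ p : P, Nonempty (D.obj p ≃ₗ[MvPolynomial (Fin n) k] LC k (ι p) j)) :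
    ∀ i : ℕ, Nonempty (roosHomology D i ≃ₗ[MvPolynomial (Fin n) k]
      ⨁ p : {p : P // ht p = j},
        (Fin (Module.finrank k (simpHomology k k {q : P // p.1 < q} i)) → LC k (ι p.1) j)) := by
  intro i
  have hprime : ∀ p, (ι p).IsPrime := fun p => (hlin p).1
  have hheight : ∀ p, (ι p).height = ht p := fun p => by
    have := hprime p
    rw [← idealHeight_prime, hht]
  have hT : ∀ p, ¬ (ht p = j) → Subsingleton (D.obj p) := by
    intro p hp
    obtain ⟨hP, S, hS, hIS⟩ := hlin p
    have := LC_subsingleton (ι p) hP S hS hIS j (by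
      rw [hheight]
      exact_mod_cast hp)
    exact (eD p).some.toEquiv.subsingleton
  have hmap : ∀ (p q : P) (h : p < q) (x : D.obj p), D.map h.le x = 0 := by
    intro p q h x
    by_cases hp : ht p = j
    · have hlt : ι q < ι p := by
        refine lt_of_le_not_ge ((horder p q).1 h.le) fun hge => ?_
        exact h.not_ge ((horder q p).2 hge)
      have := hprime p
      have := hprime q
      have h1 := Ideal.height_add_one_le_of_lt_of_isPrime hlt
      rw [hheight, hheight] at h1
      have h2 : ht q + 1 ≤ ht p := by exact_mod_cast h1
      have := hT q (by omega)
      exact Subsingleton.elim _ _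
    · have := hT p hp
      rw [Subsingleton.elim x 0, map_zero]
  letI : ∀ p, Module k (D.obj p) := fun p =>
    Module.compHom (D.obj p) (algebraMap k (MvPolynomial (Fin n) k))
  haveI : ∀ p, IsScalarTower k (MvPolynomial (Fin n) k) (D.obj p) := fun p =>
    IsScalarTower.of_algebraMap_smul fun c x => rfl
  obtain ⟨E⟩ := roos_main (k := k) D (fun p => ht p = j) hT hmap i
  exact ⟨E.trans (DFinsupp.mapRange.linearEquiv fun p =>
    LinearEquiv.piCongrRight fun _ => (eD p.1).some)⟩
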